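/- arXiv:math/0108144 — 2 statements merged into one kernel-verified Lean document; each statement's English description precedes it below -/
import Mathlib

section
/- Coordinate form of the key step of Proposition 4 (for n ≥ 2): the intersection M ∩ R equals the additive subgroup of R generated by the elements ∂ᵢ(f)·∂ⱼ(h) − ∂ⱼ(f)·∂ᵢ(h) for h ∈ R and 1 ≤ i < j ≤ n. In particular, if q₁,…,qₙ ∈ A are such that w := Σ_{i=1}^n (∂ᵢ(f)·qᵢ − s·∂ᵢ(qᵢ)) involves no variable s (i.e. w ∈ R ⊆ A), then w lies in that additive subgroup. -/
noncomputable section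

open scoped Pointwise

/-- The formal partial derivative `∂ᵢ` with respect to the `i`th variable, determined by
`coeff α (∂ᵢ g) = (α i + 1) • coeff (α + eᵢ) g`. -/
def pd {σ : Type*} (i : σ) (g : MvPowerSeries σ ℂ) : MvPowerSeries σ ℂ :=
  fun α => ((α i : ℂ) + 1) * MvPowerSeries.coeff (α + Finsupp.single i 1) g

lemma coeff_pd {σ : Type*} (i : σ) (g : MvPowerSeries σ ℂ) (α : σ →₀ ℕ) :
    MvPowerSeries.coeff α (pd i g) =
      ((α i : ℂ) + 1) * MvPowerSeries.coeff (α + Finsupp.single i 1) g := rfl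

variable (n : ℕ)

/-- `R = ℂ[[x₁,…,xₙ]]`. -/
abbrev R' := MvPowerSeries (Fin n) ℂ

/-- `A = ℂ[[s,x₁,…,xₙ]]`, where `s` is the 0th variable and `xᵢ` is the variable
of index `i` (`1 ≤ i ≤ n`). -/
abbrev A' := MvPowerSeries (Fin (n + 1)) ℂ

/-- The variable `s` of `A`. -/
def sv : A' n := MvPowerSeries.X 0

/-- Forget the `s`-exponent of a multi-index of `A`. -/
def tailF (β : Fin (n + 1) →₀ ℕ) : Fin n →₀ ℕ :=
  Finsupp.equivFunOnFinite.symm fun i => β i.succ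

/-- The inclusion `R ⊆ A` as the subring of series not involving `s`. -/
def inclR (g : R' n) : A' n :=
  fun β => if β 0 = 0 then MvPowerSeries.coeff (tailF n β) g else 0

/-- The inclusion `ℂ[[s]] ⊆ A` as the subring of series in `s` alone. -/
def toA (p : PowerSeries ℂ) : A' n :=
  fun β => if tailF n β = 0 then PowerSeries.coeff (β 0) p else 0

lemma coeff_inclR (g : R' n) (β : Fin (n + 1) →₀ ℕ) :
    MvPowerSeries.coeff β (inclR n g) =
      if β 0 = 0 then MvPowerSeries.coeff (tailF n β) g else 0 := rfl

/-- The `ℂ[[s]]`-linear operator `Fᵢ(g) = ∂ᵢ(f)·g − s·∂ᵢ(g)` on `A`. -/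
def FF (f : R' n) (i : Fin n) (g : A' n) : A' n :=
  inclR n (pd i f) * g - sv n * pd i.succ g

/-- `M = range F₁ + ⋯ + range Fₙ`, so that `H = A/M` is the formal Brieskorn lattice. -/
def Mset (f : R' n) : Set (A' n) :=
  {a | ∃ q : Fin n → A' n, a = ∑ i, FF n f i (q i)}

/-- The Jacobian ideal `J(f) = ⟨∂₁f,…,∂ₙf⟩` of `R`. -/
def Jf (f : R' n) : Ideal (R' n) :=
  Ideal.span (Set.range fun i : Fin n => pd i f)

/-- The maximal ideal `⟨x₁,…,xₙ⟩` of `R = ℂ[[x₁,…,xₙ]]`. -/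
def mx : Ideal (R' n) :=
  Ideal.span (Set.range (MvPowerSeries.X : Fin n → R' n))

/-- The ideal `J(f)·A` of `A` generated by `∂₁(f),…,∂ₙ(f)`. -/
def JA (f : R' n) : Ideal (A' n) :=
  Ideal.span (Set.range fun i : Fin n => inclR n (pd i f))

/-- The ideal `⟨x₁,…,xₙ⟩·A` of `A` generated by the variables `x₁,…,xₙ` (not `s`). -/
def XA : Ideal (A' n) :=
  Ideal.span (Set.range fun i : Fin n => (MvPowerSeries.X i.succ : A' n))

lemma pd_add {σ : Type*} (i : σ) (a b : MvPowerSeries σ ℂ) :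
    pd i (a + b) = pd i a + pd i b := by
  ext α; simp [coeff_pd, mul_add]

lemma pd_smul {σ : Type*} (i : σ) (c : ℂ) (a : MvPowerSeries σ ℂ) :
    pd i (c • a) = c • pd i a := by
  ext α; simp [coeff_pd]; ring

lemma FF_add (f : R' n) (i : Fin n) (a b : A' n) :
    FF n f i (a + b) = FF n f i a + FF n f i b := by
  simp only [FF, pd_add, mul_add]; ring

lemma FF_smul (f : R' n) (i : Fin n) (c : ℂ) (a : A' n) :
    FF n f i (c • a) = c • FF n f i a := by
  simp only [FF, pd_smul, Algebra.mul_smul_comm, smul_sub]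

lemma FF_zero (f : R' n) (i : Fin n) : FF n f i 0 = 0 := by
  simpa using FF_smul n f i 0 0

/-- `M` as a `ℂ`-submodule of `A`. -/
def Msub (f : R' n) : Submodule ℂ (A' n) where
  carrier := Mset n f
  zero_mem' := ⟨0, by simp [FF_zero]⟩
  add_mem' := by
    rintro a b ⟨q, rfl⟩ ⟨q', rfl⟩
    exact ⟨q + q', by simp [FF_add, Finset.sum_add_distrib]⟩
  smul_mem' := by
    rintro c a ⟨q, rfl⟩
    exact ⟨c • q, by simp [FF_smul, Finset.smul_sum]⟩

/-- The inclusion `R ⊆ A` as a `ℂ`-linear map. -/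
def inclL : R' n →ₗ[ℂ] A' n where
  toFun := inclR n
  map_add' a b := by
    ext β; simp only [coeff_inclR, map_add]; split <;> simp
  map_smul' c a := by
    ext β; simp only [coeff_inclR, map_smul, RingHom.id_apply]; split <;> simp

/-!
Write `q ∈ Aⁿ` as `q = ∑ₘ ωₘ sᵐ` with vector fields `ωₘ` over `R`.  Comparing powers of `s`, the sum
`∑ᵢ Fᵢ(qᵢ)` lies in `R` exactly when `ι ωₘ₊₁ = div ωₘ` for all `m`, where `ι` is contraction with
`df`, and it then equals `ι ω₀`.  The polynomial Poincaré homotopy `ω ↦ E ∧ ω`, with `E` the Euler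
vector field and the coefficients rescaled by degree, raises the order in `x` by one, so `ι` is a
topologically nilpotent perturbation of `div` and the perturbed complex is exact as well:
`ωₘ = div ηₘ - ι ηₘ₊₁` for some bivector fields `ηₘ`.  As `ι² = 0`, this gives `ι ω₀ = ι (div η₀)`,
which is visibly a sum of the required brackets.
-/

open MvPowerSeries Matrix

section OrderFiltration

variable {σ κ R : Type*} [CommRing R]

/-- The ideal of power series of order at least `N`; these ideals form the filtration by total
degree, also when `σ` is infinite. -/
def orderIdeal (N : ℕ) : Ideal (MvPowerSeries σ R) where
  carrier := {g | (N : ℕ∞) ≤ g.order}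
  zero_mem' := by simp
  add_mem' hf hg := (le_min hf hg).trans min_order_le_add
  smul_mem' _ _ hg := (le_add_left hg).trans le_order_mul

lemma mem_orderIdeal_iff {N : ℕ} {g : MvPowerSeries σ R} :
    g ∈ orderIdeal N ↔ ∀ d : σ →₀ ℕ, d.degree < N → coeff d g = 0 :=
  ⟨fun hg _ hd => coeff_of_lt_order ((Nat.cast_lt.2 hd).trans_le hg), nat_le_order⟩

lemma X_mul_mem_orderIdeal {N : ℕ} (i : σ) {g : MvPowerSeries σ R} (hg : g ∈ orderIdeal N) :
    X i * g ∈ orderIdeal (N + 1) := by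
  have hX : (1 : ℕ∞) ≤ (X i : MvPowerSeries σ R).order :=
    one_le_order_iff_constCoeff_eq_zero.2 (constantCoeff_X i)
  calc ((N + 1 : ℕ) : ℕ∞) = 1 + N := by rw [Nat.cast_succ, add_comm]
    _ ≤ (X i : MvPowerSeries σ R).order + g.order := add_le_add hX hg
    _ ≤ (X i * g).order := le_order_mul

lemma eq_of_forall_sub_mem_orderIdeal {f g : MvPowerSeries σ R}
    (h : ∀ N, f - g ∈ orderIdeal N) : f = g := by
  ext d
  rw [← sub_eq_zero, ← map_sub]
  exact mem_orderIdeal_iff.1 (h (d.degree + 1)) d d.degree.lt_succ_self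

/-- A self-map of a space of families of power series is an order contraction if it raises the
order of agreement of any two families by at least one, uniformly in the index. -/
def IsOrderContraction (Φ : (κ → MvPowerSeries σ R) → κ → MvPowerSeries σ R) : Prop :=
  ∀ N x y, (∀ a, x a - y a ∈ orderIdeal N) → ∀ a, Φ x a - Φ y a ∈ orderIdeal (N + 1)

namespace IsOrderContraction

variable {Φ : (κ → MvPowerSeries σ R) → κ → MvPowerSeries σ R}

lemma iterate_sub_mem (hΦ : IsOrderContraction Φ) (N : ℕ) (x y : κ → MvPowerSeries σ R) (a : κ) :
    Φ^[N] x a - Φ^[N] y a ∈ orderIdeal N := by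
  induction N generalizing a with
  | zero => exact mem_orderIdeal_iff.2 fun d hd => absurd hd d.degree.not_lt_zero
  | succ N ih =>
    rw [Function.iterate_succ_apply', Function.iterate_succ_apply']
    exact hΦ N _ _ ih a

lemma eq_of_isFixedPt (hΦ : IsOrderContraction Φ) {x y : κ → MvPowerSeries σ R}
    (hx : Function.IsFixedPt Φ x) (hy : Function.IsFixedPt Φ y) : x = y :=
  funext fun a => eq_of_forall_sub_mem_orderIdeal fun N => by
    simpa only [(hx.iterate N).eq, (hy.iterate N).eq] using hΦ.iterate_sub_mem N x y a

lemma exists_isFixedPt (hΦ : IsOrderContraction Φ) : ∃ x, Function.IsFixedPt Φ x := by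
  let x : κ → MvPowerSeries σ R := fun a d => coeff d (Φ^[d.degree + 1] 0 a)
  have x_sub_iterate (N : ℕ) (a : κ) : x a - Φ^[N] 0 a ∈ orderIdeal N := by
    refine mem_orderIdeal_iff.2 fun d hd => ?_
    obtain ⟨e, rfl⟩ := Nat.exists_eq_add_of_le (Nat.succ_le_of_lt hd)
    rw [Function.iterate_add_apply]
    exact mem_orderIdeal_iff.1 (hΦ.iterate_sub_mem (d.degree + 1) 0 (Φ^[e] 0) a) d
      d.degree.lt_succ_self
  refine ⟨x, funext fun a => eq_of_forall_sub_mem_orderIdeal fun N => ?_⟩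
  have image_sub_iterate : Φ x a - Φ (Φ^[N] 0) a ∈ orderIdeal (N + 1) :=
    hΦ N _ _ (x_sub_iterate N) a
  rw [← Function.iterate_succ_apply' Φ] at image_sub_iterate
  have agree : Φ x a - x a ∈ orderIdeal (N + 1) := by
    rw [← sub_sub_sub_cancel_right (Φ x a) (x a) (Φ^[N + 1] 0 a)]
    exact sub_mem image_sub_iterate (x_sub_iterate (N + 1) a)
  exact mem_orderIdeal_iff.2 fun d hd => mem_orderIdeal_iff.1 agree d (Nat.lt_succ_of_lt hd)

end IsOrderContraction

end OrderFiltration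

section Contraction

variable {σ k : Type*} [CommRing k]

lemma pderiv_pderiv_comm (i j : σ) (g : MvPowerSeries σ k) :
    pderiv k i (pderiv k j g) = pderiv k j (pderiv k i g) := by
  classical
  ext d
  simp only [coeff_pderiv, Finsupp.add_apply, add_right_comm d]
  rcases eq_or_ne i j with rfl | hij
  · rfl
  · simp only [Finsupp.single_eq_of_ne hij, Finsupp.single_eq_of_ne hij.symm, add_zero]
    ring

variable [Fintype σ]

/-- The divergence `∑ᵢ ∂ᵢ(qᵢ)` of a formal vector field. -/
def divergence : (σ → MvPowerSeries σ k) →ₗ[k] MvPowerSeries σ k :=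
  ∑ i, (pderiv k i).toLinearMap ∘ₗ LinearMap.proj i

lemma divergence_apply (q : σ → MvPowerSeries σ k) : divergence q = ∑ i, pderiv k i (q i) := by
  simp [divergence]

lemma divergence_X_smul (i : σ) (q : σ → MvPowerSeries σ k) :
    divergence ((X i : MvPowerSeries σ k) • q) = q i + X i * divergence q := by
  classical
  simp [divergence_apply, pderiv_X, Pi.single_apply, Finset.sum_add_distrib, Finset.mul_sum,
    add_comm]

/-- The divergence of a formal bivector field.  A matrix `h` encodes the bivector field
`∑ hᵢⱼ ∂ᵢ ∧ ∂ⱼ`, whose components form the skew matrix `h - hᵀ`. -/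
def bivectorDivergence (h : Matrix σ σ (MvPowerSeries σ k)) : σ → MvPowerSeries σ k :=
  fun i => divergence ((h - hᵀ) i)

/-- The contraction of a formal bivector field, encoded as for `bivectorDivergence`, with the
differential form `∑ Fⱼ dxⱼ`. -/
def bivectorContraction (F : σ → MvPowerSeries σ k) (h : Matrix σ σ (MvPowerSeries σ k)) :
    σ → MvPowerSeries σ k :=
  (h - hᵀ) *ᵥ F

lemma bivectorContraction_sub (F : σ → MvPowerSeries σ k)
    (h h' : Matrix σ σ (MvPowerSeries σ k)) :
    bivectorContraction F (h - h') = bivectorContraction F h - bivectorContraction F h' := by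
  rw [bivectorContraction, transpose_sub, sub_sub_sub_comm, sub_mulVec, bivectorContraction,
    bivectorContraction]

lemma bivectorContraction_mem {I : Ideal (MvPowerSeries σ k)} (F : σ → MvPowerSeries σ k)
    {h : Matrix σ σ (MvPowerSeries σ k)} (hh : ∀ i j, h i j ∈ I) (i : σ) :
    bivectorContraction F h i ∈ I :=
  I.sum_mem fun j _ => I.mul_mem_right _ (I.sub_mem (hh i j) (hh j i))

lemma dotProduct_bivectorContraction (F : σ → MvPowerSeries σ k)
    (h : Matrix σ σ (MvPowerSeries σ k)) : F ⬝ᵥ bivectorContraction F h = 0 := by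
  rw [bivectorContraction, sub_mulVec, dotProduct_sub, mulVec_transpose, dotProduct_mulVec,
    dotProduct_comm, sub_self]

lemma dotProduct_bivectorDivergence (F : σ → MvPowerSeries σ k)
    (h : Matrix σ σ (MvPowerSeries σ k)) :
    F ⬝ᵥ bivectorDivergence h =
      ∑ i, ∑ j, (F i * pderiv k j (h i j) - F j * pderiv k i (h i j)) := by
  simp only [dotProduct, bivectorDivergence, divergence_apply, Matrix.sub_apply, transpose_apply,
    map_sub, mul_sub, Finset.mul_sum, Finset.sum_sub_distrib]
  rw [Finset.sum_comm (f := fun i j => F i * pderiv k j (h j i))]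

lemma divergence_bivectorContraction {F : σ → MvPowerSeries σ k}
    (hF : ∀ i j, pderiv k i (F j) = pderiv k j (F i)) (h : Matrix σ σ (MvPowerSeries σ k)) :
    divergence (bivectorContraction F h) = -(F ⬝ᵥ bivectorDivergence h) := by
  have closed : ∑ i, ∑ j, (h i j - h j i) * pderiv k i (F j) = 0 := by
    simp only [sub_mul, Finset.sum_sub_distrib, sub_eq_zero]
    rw [Finset.sum_comm]
    exact Finset.sum_congr rfl fun i _ => Finset.sum_congr rfl fun j _ => by rw [hF]
  calc divergence (bivectorContraction F h)
      = ∑ i, ∑ j, (h i j - h j i) * pderiv k i (F j) +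
          ∑ i, ∑ j, F j * pderiv k i (h i j - h j i) := by
        simp only [divergence_apply, bivectorContraction, mulVec, dotProduct, Matrix.sub_apply,
          transpose_apply, map_sum, Derivation.leibniz, smul_eq_mul, Finset.sum_add_distrib]
    _ = -(F ⬝ᵥ bivectorDivergence h) := by
        rw [closed, zero_add, dotProduct_bivectorDivergence]
        simp only [map_sub, mul_sub, Finset.sum_sub_distrib, neg_sub]
        rw [Finset.sum_comm (f := fun i j => F j * pderiv k i (h j i))]

end Contraction

section Homotopy

variable {σ k : Type*} [Field k]

/-- The operator dividing the coefficient of each monomial of degree `d` by `d + c`: the inverse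
of `∑ xᵢ∂ᵢ + c` when no `d + c` vanishes in `k`, with coefficient `0` where it does. -/
def eulerInv (c : ℕ) : MvPowerSeries σ k →ₗ[k] MvPowerSeries σ k where
  toFun g d := coeff d g / (d.degree + c : ℕ)
  map_add' _ _ := funext fun _ => add_div _ _ _
  map_smul' _ _ := funext fun _ => mul_div_assoc _ _ _

lemma coeff_eulerInv (c : ℕ) (g : MvPowerSeries σ k) (d : σ →₀ ℕ) :
    coeff d (eulerInv c g) = coeff d g / (d.degree + c : ℕ) := rfl

lemma eulerInv_mem_orderIdeal (c : ℕ) {N : ℕ} {g : MvPowerSeries σ k} (hg : g ∈ orderIdeal N) :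
    eulerInv c g ∈ orderIdeal N :=
  mem_orderIdeal_iff.2 fun d hd => by
    rw [coeff_eulerInv, mem_orderIdeal_iff.1 hg d hd, zero_div]

lemma pderiv_eulerInv (c : ℕ) (i : σ) (g : MvPowerSeries σ k) :
    pderiv k i (eulerInv c g) = eulerInv (c + 1) (pderiv k i g) := by
  ext d
  rw [coeff_pderiv, coeff_eulerInv, coeff_eulerInv, coeff_pderiv, map_add, Finsupp.degree_single,
    add_assoc, add_comm 1 c, div_mul_eq_mul_div]

/-- The Euler vector field `∑ xᵢ∂ᵢ` multiplied by `eulerInv c u`: the homotopy of the Poincaré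
lemma.  In `n` variables it is used with `c = n` on functions and `c = n - 1` on vector fields. -/
def radialField (c : ℕ) : MvPowerSeries σ k →ₗ[k] (σ → MvPowerSeries σ k) :=
  LinearMap.pi fun i => LinearMap.mulLeft k (X i) ∘ₗ eulerInv c

lemma radialField_apply (c : ℕ) (u : MvPowerSeries σ k) (i : σ) :
    radialField c u i = X i * eulerInv c u := rfl

lemma radialField_mem_orderIdeal (c : ℕ) {N : ℕ} {u : MvPowerSeries σ k} (hu : u ∈ orderIdeal N)
    (i : σ) : radialField c u i ∈ orderIdeal (N + 1) :=
  X_mul_mem_orderIdeal i (eulerInv_mem_orderIdeal c hu)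

variable [Fintype σ]

lemma divergence_eulerInv (c : ℕ) (q : σ → MvPowerSeries σ k) :
    divergence (fun i => eulerInv c (q i)) = eulerInv (c + 1) (divergence q) := by
  simp only [divergence_apply, pderiv_eulerInv, map_sum]

lemma coeff_divergence_X_mul (g : MvPowerSeries σ k) (d : σ →₀ ℕ) :
    coeff d (divergence fun i => X i * g) = (d.degree + Fintype.card σ : ℕ) * coeff d g := by
  have coeff_term (i : σ) : coeff d (pderiv k i (X i * g)) = ((d i : k) + 1) * coeff d g := by
    rw [coeff_pderiv, add_comm d, X_def, coeff_add_monomial_mul, one_mul, mul_comm]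
  rw [divergence_apply, map_sum]
  simp only [coeff_term, ← Finset.sum_mul, Finset.sum_add_distrib, Finsupp.degree_eq_sum]
  simp

lemma divergence_radialField [CharZero k] {c : ℕ} (hc : c ≠ 0) (hσ : Fintype.card σ = c + 1)
    (u : MvPowerSeries σ k) : divergence (radialField c u) = u + eulerInv c u := by
  ext d
  have hd : ((d.degree + c : ℕ) : k) ≠ 0 := Nat.cast_ne_zero.2 (by omega)
  rw [funext (radialField_apply c u), coeff_divergence_X_mul, hσ, map_add, coeff_eulerInv,
    ← add_assoc, Nat.cast_succ]
  field_simp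

theorem bivectorDivergence_radialField_add [CharZero k] {c : ℕ} (hc : c ≠ 0)
    (hσ : Fintype.card σ = c + 1) (q : σ → MvPowerSeries σ k) :
    bivectorDivergence (of fun i => radialField c (q i)) + radialField (c + 1) (divergence q) =
      q := by
  funext i
  let h : Matrix σ σ (MvPowerSeries σ k) := of fun i => radialField c (q i)
  have row : (h - hᵀ) i = radialField c (q i) - (X i : MvPowerSeries σ k) • fun j =>
      eulerInv c (q j) := rfl
  rw [Pi.add_apply, bivectorDivergence, row, map_sub, divergence_radialField hc hσ,
    divergence_X_smul, divergence_eulerInv, radialField_apply]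
  ring

lemma exists_eq_radialField_add_contraction (c : ℕ) (F : σ → MvPowerSeries σ k)
    (ω : ℕ → σ → MvPowerSeries σ k) :
    ∃ η : ℕ → Matrix σ σ (MvPowerSeries σ k), ∀ m,
      η m = of fun i => radialField c ((ω m + bivectorContraction F (η (m + 1))) i) := by
  let slice (h : ℕ × σ × σ → MvPowerSeries σ k) (m : ℕ) : Matrix σ σ (MvPowerSeries σ k) :=
    of fun i j => h (m, i, j)
  let Φ (h : ℕ × σ × σ → MvPowerSeries σ k) : ℕ × σ × σ → MvPowerSeries σ k := fun a =>
    radialField c ((ω a.1 + bivectorContraction F (slice h (a.1 + 1))) a.2.1) a.2.2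
  have contraction : IsOrderContraction Φ := by
    rintro N x y hxy ⟨m, i, j⟩
    have sub_eq : Φ x (m, i, j) - Φ y (m, i, j) =
        radialField c (bivectorContraction F (slice x (m + 1) - slice y (m + 1)) i) j := by
      rw [bivectorContraction_sub, ← add_sub_add_left_eq_sub _ _ (ω m), Pi.sub_apply, map_sub]
      rfl
    rw [sub_eq]
    exact radialField_mem_orderIdeal c
      (bivectorContraction_mem F (fun i j => hxy (m + 1, i, j)) i) j
  obtain ⟨x, hx⟩ := contraction.exists_isFixedPt
  exact ⟨slice x, fun m => Matrix.ext fun i j => (congrFun hx (m, i, j)).symm⟩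

lemma eq_zero_of_eq_radialField_dotProduct {c : ℕ} {F : σ → MvPowerSeries σ k}
    {ρ : ℕ → σ → MvPowerSeries σ k} (hρ : ∀ m, ρ m = radialField c (F ⬝ᵥ ρ (m + 1))) :
    ρ = 0 := by
  let Φ (x : ℕ × σ → MvPowerSeries σ k) : ℕ × σ → MvPowerSeries σ k := fun a =>
    radialField c (F ⬝ᵥ fun i => x (a.1 + 1, i)) a.2
  have contraction : IsOrderContraction Φ := by
    rintro N x y hxy ⟨m, i⟩
    have sub_eq : Φ x (m, i) - Φ y (m, i) =
        radialField c (F ⬝ᵥ fun i => x (m + 1, i) - y (m + 1, i)) i := by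
      change _ = radialField c (F ⬝ᵥ ((fun i => x (m + 1, i)) - fun i => y (m + 1, i))) i
      rw [dotProduct_sub, map_sub]
      rfl
    rw [sub_eq]
    exact radialField_mem_orderIdeal c
      ((orderIdeal N).sum_mem fun j _ => Ideal.mul_mem_left _ _ (hxy (m + 1, j))) i
  have fixed : Function.IsFixedPt Φ fun a => ρ a.1 a.2 :=
    funext fun a => (congrFun (hρ a.1) a.2).symm
  have zero_fixed : Function.IsFixedPt Φ 0 := funext fun a => by
    change radialField c (F ⬝ᵥ 0) a.2 = 0
    rw [dotProduct_zero, map_zero, Pi.zero_apply]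
  exact funext₂ fun m i => congrFun (contraction.eq_of_isFixedPt fixed zero_fixed) (m, i)

theorem exists_eq_bivectorDivergence_sub_contraction [CharZero k] [Nontrivial σ]
    {F : σ → MvPowerSeries σ k} (hF : ∀ i j, pderiv k i (F j) = pderiv k j (F i))
    {ω : ℕ → σ → MvPowerSeries σ k} (hω : ∀ m, F ⬝ᵥ ω (m + 1) = divergence (ω m)) :
    ∃ η : ℕ → Matrix σ σ (MvPowerSeries σ k),
      ∀ m, ω m = bivectorDivergence (η m) - bivectorContraction F (η (m + 1)) := by
  obtain ⟨c, hc, hσ⟩ : ∃ c ≠ 0, Fintype.card σ = c + 1 :=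
    ⟨Fintype.card σ - 1, Nat.sub_ne_zero_of_lt Fintype.one_lt_card,
      (Nat.sub_add_cancel Fintype.card_pos).symm⟩
  obtain ⟨η, hη⟩ := exists_eq_radialField_add_contraction c F ω
  let ψ (m : ℕ) : σ → MvPowerSeries σ k := ω m + bivectorContraction F (η (m + 1))
  let ρ (m : ℕ) : σ → MvPowerSeries σ k := ψ m - bivectorDivergence (η m)
  have divergence_ψ (m : ℕ) : divergence (ψ m) = F ⬝ᵥ ρ (m + 1) := by
    rw [map_add, ← hω, divergence_bivectorContraction hF, dotProduct_sub, dotProduct_add,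
      dotProduct_bivectorContraction, add_zero, sub_eq_add_neg]
  have ρ_eq (m : ℕ) : ρ m = radialField (c + 1) (F ⬝ᵥ ρ (m + 1)) := by
    rw [← divergence_ψ, sub_eq_iff_eq_add', hη m]
    exact (bivectorDivergence_radialField_add hc hσ (ψ m)).symm
  refine ⟨η, fun m => ?_⟩
  have ρ_zero : ψ m - bivectorDivergence (η m) = 0 :=
    congrFun (eq_zero_of_eq_radialField_dotProduct ρ_eq) m
  rw [eq_sub_iff_add_eq]
  exact sub_eq_zero.1 ρ_zero

end Homotopy

section BrieskornLattice

variable {n}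

lemma pd_eq_pderiv {σ : Type*} (i : σ) (g : MvPowerSeries σ ℂ) : pd i g = pderiv ℂ i g := by
  ext d
  rw [coeff_pd, coeff_pderiv, mul_comm]

lemma finSuccEquiv_inclR (g : R' n) : finSuccEquiv ℂ n (inclR n g) = PowerSeries.C g := by
  ext m d
  have tailF_cons : tailF n (d.cons m) = d := by
    ext i
    simp [tailF]
  rw [coeff_coeff_finSuccEquiv, coeff_inclR, tailF_cons, Finsupp.cons_zero, PowerSeries.coeff_C]
  split_ifs <;> simp

lemma coeff_finSuccEquiv_pd (m : ℕ) (i : Fin n) (g : A' n) :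
    PowerSeries.coeff m (finSuccEquiv ℂ n (pd i.succ g)) =
      pd i (PowerSeries.coeff m (finSuccEquiv ℂ n g)) := by
  ext d
  have cons_add_single : d.cons m + Finsupp.single i.succ 1 = (d + Finsupp.single i 1).cons m := by
    ext j
    refine Fin.cases ?_ (fun j => ?_) j <;> simp [← Finsupp.cons_zero_single_eq_single_succ]
  rw [coeff_coeff_finSuccEquiv, coeff_pd, coeff_pd, coeff_coeff_finSuccEquiv, cons_add_single,
    Finsupp.cons_succ]

lemma inclR_mul (a b : R' n) : inclR n (a * b) = inclR n a * inclR n b :=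
  (finSuccEquiv ℂ n).injective <| by simp only [map_mul, finSuccEquiv_inclR]

lemma inclR_pd (i : Fin n) (g : R' n) : inclR n (pd i g) = pd i.succ (inclR n g) := by
  refine (finSuccEquiv ℂ n).injective (PowerSeries.ext fun m => ?_)
  rw [coeff_finSuccEquiv_pd, finSuccEquiv_inclR, finSuccEquiv_inclR, PowerSeries.coeff_C,
    PowerSeries.coeff_C]
  split_ifs
  · rfl
  · rw [pd_eq_pderiv, map_zero]

lemma coeff_zero_finSuccEquiv_FF (f : R' n) (i : Fin n) (g : A' n) :
    PowerSeries.coeff 0 (finSuccEquiv ℂ n (FF n f i g)) =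
      pd i f * PowerSeries.coeff 0 (finSuccEquiv ℂ n g) := by
  rw [FF, sv, map_sub, map_mul, map_mul, finSuccEquiv_inclR, finSuccEquiv_X_zero, map_sub,
    PowerSeries.coeff_C_mul, PowerSeries.coeff_zero_X_mul, sub_zero]

lemma coeff_succ_finSuccEquiv_FF (f : R' n) (i : Fin n) (g : A' n) (m : ℕ) :
    PowerSeries.coeff (m + 1) (finSuccEquiv ℂ n (FF n f i g)) =
      pd i f * PowerSeries.coeff (m + 1) (finSuccEquiv ℂ n g) -
        pd i (PowerSeries.coeff m (finSuccEquiv ℂ n g)) := by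
  rw [FF, sv, map_sub, map_mul, map_mul, finSuccEquiv_inclR, finSuccEquiv_X_zero, map_sub,
    PowerSeries.coeff_C_mul, PowerSeries.coeff_succ_X_mul, coeff_finSuccEquiv_pd]

/-- The additive subgroup of `R` generated by the `2 × 2` minors `∂ᵢ(f)·∂ⱼ(h) − ∂ⱼ(f)·∂ᵢ(h)` of
the Jacobian matrices of pairs `(f, h)`, that is, by the components of the forms `df ∧ dh`. -/
def jacobianMinorSubgroup (f : R' n) : AddSubgroup (R' n) :=
  AddSubgroup.closure
    {w : R' n | ∃ (h : R' n) (i j : Fin n), i < j ∧ w = pd i f * pd j h - pd j f * pd i h}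

lemma minor_mem_jacobianMinorSubgroup (f h : R' n) (i j : Fin n) :
    pd i f * pd j h - pd j f * pd i h ∈ jacobianMinorSubgroup f := by
  rcases lt_trichotomy i j with hij | rfl | hij
  · exact AddSubgroup.subset_closure ⟨h, i, j, hij, rfl⟩
  · rw [sub_self]
    exact zero_mem _
  · rw [← neg_sub]
    exact neg_mem (AddSubgroup.subset_closure ⟨h, j, i, hij, rfl⟩)

lemma FF_mem_Msub (f : R' n) (i : Fin n) (g : A' n) : FF n f i g ∈ Msub n f := by
  refine ⟨Pi.single i g, ?_⟩
  rw [Fintype.sum_eq_single i fun j hj => by rw [Pi.single_eq_of_ne hj, FF_zero],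
    Pi.single_eq_same]

lemma inclR_minor (f h : R' n) (i j : Fin n) :
    inclR n (pd i f * pd j h - pd j f * pd i h) =
      FF n f i (inclR n (pd j h)) - FF n f j (inclR n (pd i h)) := by
  have inclR_sub : ∀ a b : R' n, inclR n (a - b) = inclR n a - inclR n b := map_sub (inclL n)
  have pd_comm : pd i (pd j h) = pd j (pd i h) := by
    simp only [pd_eq_pderiv, pderiv_pderiv_comm i j]
  rw [inclR_sub, inclR_mul, inclR_mul, FF, FF, ← inclR_pd, ← inclR_pd, pd_comm,
    sub_sub_sub_cancel_right]

theorem jacobianMinorSubgroup_le (f : R' n) :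
    jacobianMinorSubgroup f ≤ ((Msub n f).comap (inclL n)).toAddSubgroup := by
  refine (AddSubgroup.closure_le _).2 ?_
  rintro _ ⟨h, i, j, -, rfl⟩
  change inclR n _ ∈ Msub n f
  rw [inclR_minor]
  exact sub_mem (FF_mem_Msub f i _) (FF_mem_Msub f j _)

theorem mem_jacobianMinorSubgroup_of_inclR_eq_sum (hn : 2 ≤ n) {f w : R' n} {q : Fin n → A' n}
    (hw : inclR n w = ∑ i, FF n f i (q i)) : w ∈ jacobianMinorSubgroup f := by
  have : Nontrivial (Fin n) := Fin.nontrivial_iff_two_le.2 hn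
  let F (i : Fin n) : R' n := pderiv ℂ i f
  let ω (m : ℕ) (i : Fin n) : R' n := PowerSeries.coeff m (finSuccEquiv ℂ n (q i))
  have coeff_hw (m : ℕ) : PowerSeries.coeff m (PowerSeries.C w) =
      ∑ i, PowerSeries.coeff m (finSuccEquiv ℂ n (FF n f i (q i))) := by
    rw [← finSuccEquiv_inclR, hw, map_sum, map_sum]
  have w_eq : w = F ⬝ᵥ ω 0 := by
    simpa only [PowerSeries.coeff_zero_C, coeff_zero_finSuccEquiv_FF, pd_eq_pderiv, dotProduct,
      F, ω] using coeff_hw 0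
  have dotProduct_ω (m : ℕ) : F ⬝ᵥ ω (m + 1) = divergence (ω m) := by
    have := coeff_hw (m + 1)
    simp only [PowerSeries.coeff_succ_C, coeff_succ_finSuccEquiv_FF, pd_eq_pderiv,
      Finset.sum_sub_distrib] at this
    rw [divergence_apply]
    exact sub_eq_zero.1 this.symm
  obtain ⟨η, hη⟩ := exists_eq_bivectorDivergence_sub_contraction
    (fun i j => pderiv_pderiv_comm i j f) dotProduct_ω
  have w_eq_minors : w = ∑ i, ∑ j, (pd i f * pd j (η 0 i j) - pd j f * pd i (η 0 i j)) := by
    rw [w_eq, hη 0, dotProduct_sub, dotProduct_bivectorContraction, sub_zero,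
      dotProduct_bivectorDivergence]
    simp only [pd_eq_pderiv, F]
  rw [w_eq_minors]
  exact sum_mem fun i _ => sum_mem fun j _ => minor_mem_jacobianMinorSubgroup f (η 0 i j) i j

theorem brieskorn_inter_R_general (hn : 2 ≤ n) (f w : R' n) :
    inclR n w ∈ Mset n f ↔ w ∈ jacobianMinorSubgroup f :=
  ⟨fun ⟨_, hq⟩ => mem_jacobianMinorSubgroup_of_inclR_eq_sum hn hq,
    fun hw => jacobianMinorSubgroup_le f hw⟩

end BrieskornLattice

/-- **Key step of Proposition 4 (coordinate form), `n ≥ 2`**: the intersection `M ∩ R`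
equals the additive subgroup of `R` generated by the elements
`∂ᵢ(f)·∂ⱼ(h) − ∂ⱼ(f)·∂ᵢ(h)` for `h ∈ R` and `i < j`.  In particular, if
`w = Σᵢ (∂ᵢ(f)·qᵢ − s·∂ᵢ(qᵢ))` involves no variable `s`, then `w` lies in that
additive subgroup. -/
theorem brieskorn_inter_R (n : ℕ) (hn : 2 ≤ n) (f : R' n)
    (hf0 : MvPowerSeries.constantCoeff f = 0)
    (m : ℕ) (hm : 1 ≤ m) (hiso : mx n ^ m ≤ Jf n f) :
    (∀ w : R' n, inclR n w ∈ Mset n f ↔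
      w ∈ AddSubgroup.closure
        {w : R' n | ∃ (h : R' n) (i j : Fin n), i < j ∧
          w = pd i f * pd j h - pd j f * pd i h}) ∧
    (∀ (q : Fin n → A' n) (w : R' n), inclR n w = ∑ i, FF n f i (q i) →
      w ∈ AddSubgroup.closure
        {w : R' n | ∃ (h : R' n) (i j : Fin n), i < j ∧
          w = pd i f * pd j h - pd j f * pd i h}) :=
  ⟨fun w => brieskorn_inter_R_general hn f w,
    fun q w hw => (brieskorn_inter_R_general hn f w).1 ⟨q, hw⟩⟩
end
end

section
/- The special fibre of the formal Brieskorn lattice is the Milnor algebra: M + s·A = J(f)·A + s·A (where J(f)·A is the ideal of A generated by ∂₁(f),…,∂ₙ(f) and s·A the ideal generated by s), and the inclusion R ⊆ A induces a ℂ-linear isomorphism R/J(f) ≅ A/(M + s·A) = H/sH; in particular dim_ℂ (H/sH) = μ, the Milnor number of f. -/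
noncomputable section

open scoped Pointwise

variable (n : ℕ)

/-! Let `π : A → R` set `s = 0`; it is a retraction of the inclusion `R ⊆ A` with kernel `s·A`.
Since `π (Fᵢ g) = ∂ᵢ(f) · π g`, both `M` and `J(f)·A` have image `J(f)` under `π`, so both
`M + s·A` and `J(f)·A + s·A` equal `π⁻¹(J(f))`, and `π` inverts the map `R/J(f) → A/π⁻¹(J(f))`
induced by the inclusion. -/

section Retraction

variable {S V W : Type*} [Ring S] [AddCommGroup V] [AddCommGroup W] [Module S V] [Module S W]
  {ι : V →ₗ[S] W} {π : W →ₗ[S] V}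

lemma surjective_mkQ_comap_comp_of_leftInverse (h : Function.LeftInverse π ι)
    (J : Submodule S V) : Function.Surjective ((J.comap π).mkQ ∘ₗ ι) := by
  intro x
  obtain ⟨w, rfl⟩ := (J.comap π).mkQ_surjective x
  refine ⟨π w, (Submodule.Quotient.eq _).2 ?_⟩
  rw [Submodule.mem_comap, map_sub, h (π w), sub_self]
  exact J.zero_mem

lemma ker_mkQ_comap_comp_of_leftInverse (h : Function.LeftInverse π ι) (J : Submodule S V) :
    LinearMap.ker ((J.comap π).mkQ ∘ₗ ι) = J := by
  ext v
  rw [LinearMap.ker_comp, Submodule.ker_mkQ, Submodule.mem_comap, Submodule.mem_comap, h v]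

end Retraction

section KillVariable

variable {σ τ S : Type*} [CommSemiring S] {e : σ ↪ τ} {t : τ}

lemma mem_range_embDomain_iff_eq_zero (he : Set.range e = {t}ᶜ) (β : τ →₀ ℕ) :
    β ∈ Set.range (Finsupp.embDomain e) ↔ β t = 0 := by
  rw [Finsupp.mem_range_embDomain_iff, he, Set.subset_compl_singleton_iff, Finset.mem_coe,
    Finsupp.notMem_support_iff]

lemma killCompl_eq_zero_iff_X_dvd (he : Set.range e = {t}ᶜ) (p : MvPowerSeries τ S) :
    MvPowerSeries.killCompl e p = 0 ↔ MvPowerSeries.X t ∣ p := by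
  simp only [MvPowerSeries.X_dvd_iff, ← mem_range_embDomain_iff_eq_zero he, Set.forall_mem_range,
    MvPowerSeries.ext_iff, MvPowerSeries.coeff_killCompl, map_zero]

end KillVariable

section SpecialFibre

variable {n}

/-- The retraction `A → R` of the inclusion `R ⊆ A` that sets `s = 0`. -/
def setSZero : A' n →ₐ[ℂ] R' n :=
  MvPowerSeries.killCompl (Fin.succEmb n)

lemma ker_setSZero : RingHom.ker (setSZero (n := n)) = Ideal.span {sv n} := by
  ext a
  rw [RingHom.mem_ker, Ideal.mem_span_singleton]
  exact killCompl_eq_zero_iff_X_dvd (Fin.range_succ n) a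

lemma inclR_eq_rename (g : R' n) : inclR n g = MvPowerSeries.rename (Fin.succEmb n) g := by
  have hrange (β : Fin (n + 1) →₀ ℕ) :
      β ∈ Set.range (Finsupp.embDomain (Fin.succEmb n)) ↔ β 0 = 0 :=
    mem_range_embDomain_iff_eq_zero (Fin.range_succ n) β
  ext β
  rw [coeff_inclR]
  split_ifs with h0
  · obtain ⟨α, rfl⟩ := (hrange β).2 h0
    have htail : tailF n (α.embDomain (Fin.succEmb n)) = α :=
      Finsupp.ext fun i => Finsupp.embDomain_apply_self (Fin.succEmb n) α i
    rw [htail, MvPowerSeries.coeff_embDomain_rename]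
  · refine (MvPowerSeries.coeff_rename_eq_zero _ g ?_).symm
    rwa [← funext (Finsupp.embDomain_eq_mapDomain (Fin.succEmb n)), hrange]

lemma setSZero_inclR (g : R' n) : setSZero (inclR n g) = g := by
  rw [inclR_eq_rename]
  exact MvPowerSeries.killCompl_rename_app g

lemma leftInverse_setSZero_inclL :
    Function.LeftInverse (setSZero (n := n)).toLinearMap (inclL n) :=
  setSZero_inclR

lemma setSZero_sv : setSZero (sv n) = 0 := by
  rw [← RingHom.mem_ker, ker_setSZero]
  exact Ideal.mem_span_singleton_self _

lemma setSZero_FF (f : R' n) (i : Fin n) (g : A' n) :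
    setSZero (FF n f i g) = pd i f * setSZero g := by
  rw [FF, map_sub, map_mul, map_mul, setSZero_inclR, setSZero_sv, zero_mul, sub_zero]

lemma map_setSZero_Msub (f : R' n) :
    (Msub n f).map setSZero.toLinearMap = (Jf n f).restrictScalars ℂ := by
  ext g
  rw [Submodule.restrictScalars_mem, Jf, Ideal.mem_span_range_iff_exists_fun]
  constructor
  · rintro ⟨_, ⟨q, rfl⟩, rfl⟩
    exact ⟨fun i => setSZero (q i), by simp [setSZero_FF, mul_comm]⟩
  · rintro ⟨c, rfl⟩
    exact ⟨_, ⟨fun i => inclR n (c i), rfl⟩, by simp [setSZero_FF, setSZero_inclR, mul_comm]⟩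

lemma map_setSZero_JA (f : R' n) :
    ((JA n f).restrictScalars ℂ).map setSZero.toLinearMap = (Jf n f).restrictScalars ℂ := by
  ext g
  rw [Submodule.restrictScalars_mem, Jf, Ideal.mem_span_range_iff_exists_fun]
  constructor
  · rintro ⟨a, ha, rfl⟩
    obtain ⟨c, rfl⟩ := Ideal.mem_span_range_iff_exists_fun.1 ha
    exact ⟨fun i => setSZero (c i), by simp [setSZero_inclR]⟩
  · rintro ⟨c, rfl⟩
    exact ⟨_, Ideal.mem_span_range_iff_exists_fun.2 ⟨fun i => inclR n (c i), rfl⟩,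
      by simp [setSZero_inclR]⟩

lemma sup_span_sv_eq_comap_map (N : Submodule ℂ (A' n)) :
    N ⊔ (Ideal.span {sv n}).restrictScalars ℂ =
      (N.map setSZero.toLinearMap).comap setSZero.toLinearMap := by
  rw [Submodule.comap_map_eq, ← ker_setSZero]
  rfl

lemma Msub_sup_span_sv (f : R' n) :
    Msub n f ⊔ (Ideal.span {sv n}).restrictScalars ℂ =
      ((Jf n f).restrictScalars ℂ).comap setSZero.toLinearMap := by
  rw [sup_span_sv_eq_comap_map, map_setSZero_Msub]

lemma JA_sup_span_sv (f : R' n) :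
    (JA n f).restrictScalars ℂ ⊔ (Ideal.span {sv n}).restrictScalars ℂ =
      ((Jf n f).restrictScalars ℂ).comap setSZero.toLinearMap := by
  rw [sup_span_sv_eq_comap_map, map_setSZero_JA]

lemma surjective_mkQ_comp_inclL (f : R' n) : Function.Surjective
    ((Msub n f ⊔ (Ideal.span {sv n}).restrictScalars ℂ).mkQ ∘ₗ inclL n) := by
  rw [Msub_sup_span_sv]
  exact surjective_mkQ_comap_comp_of_leftInverse leftInverse_setSZero_inclL _

lemma ker_mkQ_comp_inclL (f : R' n) :
    LinearMap.ker ((Msub n f ⊔ (Ideal.span {sv n}).restrictScalars ℂ).mkQ ∘ₗ inclL n) =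
      (Jf n f).restrictScalars ℂ := by
  rw [Msub_sup_span_sv]
  exact ker_mkQ_comap_comp_of_leftInverse leftInverse_setSZero_inclL _

/-- The isomorphism `R/J(f) ≅ A/(M + s·A) = H/sH` induced by the inclusion `R ⊆ A`. -/
def milnorAlgebraEquivSpecialFibre (f : R' n) :
    (R' n ⧸ Jf n f) ≃ₗ[ℂ] A' n ⧸ (Msub n f ⊔ (Ideal.span {sv n}).restrictScalars ℂ) :=
  (Submodule.Quotient.restrictScalarsEquiv ℂ (Jf n f)).symm ≪≫ₗ
    Submodule.quotEquivOfEq _ _ (ker_mkQ_comp_inclL f).symm ≪≫ₗ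
    LinearMap.quotKerEquivOfSurjective _ (surjective_mkQ_comp_inclL f)

theorem brieskorn_special_fibre_general (f : R' n) :
    Msub n f ⊔ (Ideal.span {sv n}).restrictScalars ℂ =
      (JA n f).restrictScalars ℂ ⊔ (Ideal.span {sv n}).restrictScalars ℂ ∧
    Function.Surjective
      ((Msub n f ⊔ (Ideal.span {sv n}).restrictScalars ℂ).mkQ ∘ₗ inclL n) ∧
    LinearMap.ker ((Msub n f ⊔ (Ideal.span {sv n}).restrictScalars ℂ).mkQ ∘ₗ inclL n) =
      (Jf n f).restrictScalars ℂ ∧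
    Module.rank ℂ (A' n ⧸ (Msub n f ⊔ (Ideal.span {sv n}).restrictScalars ℂ)) =
      Module.rank ℂ (R' n ⧸ Jf n f) :=
  ⟨(Msub_sup_span_sv f).trans (JA_sup_span_sv f).symm, surjective_mkQ_comp_inclL f,
    ker_mkQ_comp_inclL f, (milnorAlgebraEquivSpecialFibre f).rank_eq.symm⟩

end SpecialFibre

/-- **The special fibre of the formal Brieskorn lattice is the Milnor algebra**:
`M + s·A = J(f)·A + s·A`, and the inclusion `R ⊆ A` induces a `ℂ`-linear
isomorphism `R/J(f) ≅ A/(M + s·A) = H/sH` (the composite `R → A → A/(M + s·A)` is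
surjective with kernel `J(f)`); in particular `dim_ℂ (H/sH) = μ`, the Milnor
number of `f`. -/
theorem brieskorn_special_fibre (n : ℕ) (hn : 1 ≤ n) (f : R' n)
    (hf0 : MvPowerSeries.constantCoeff f = 0)
    (m : ℕ) (hm : 1 ≤ m) (hiso : mx n ^ m ≤ Jf n f) :
    Msub n f ⊔ (Ideal.span {sv n}).restrictScalars ℂ =
      (JA n f).restrictScalars ℂ ⊔ (Ideal.span {sv n}).restrictScalars ℂ ∧
    Function.Surjective
      ((Msub n f ⊔ (Ideal.span {sv n}).restrictScalars ℂ).mkQ ∘ₗ inclL n) ∧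
    LinearMap.ker ((Msub n f ⊔ (Ideal.span {sv n}).restrictScalars ℂ).mkQ ∘ₗ inclL n) =
      (Jf n f).restrictScalars ℂ ∧
    Module.finrank ℂ (A' n ⧸ (Msub n f ⊔ (Ideal.span {sv n}).restrictScalars ℂ)) =
      Module.finrank ℂ (R' n ⧸ Jf n f) := by
  obtain ⟨hsup, hsurj, hker, hrank⟩ := brieskorn_special_fibre_general f
  exact ⟨hsup, hsurj, hker, congrArg Cardinal.toNat hrank⟩
end
end
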